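/- Let m ≥ 3 and let γ : I → ℝ^m be a C^∞ curve on an open interval I such that for every t ∈ I the vectors γ'(t), γ''(t) are linearly independent and γ'''(t) lies in the span of γ'(t) and γ''(t) (γ is torsionless with respect to the flat connection). Then for every t₀ ∈ I the tangent surface f(t,s) = γ(t) + s γ'(t) is, as a germ at (t₀, 0) ∈ I × ℝ, diffeomorphic to the fold (u,w) ↦ (u, w², 0, …, 0) : ℝ² → ℝ^m; in particular f is generically two-to-one near (t₀,0). -/

import Mathlib

open Set

noncomputable section

/-- `σ` is a `C^∞` diffeomorphism from the open set `U` onto its open image. -/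
def SmoothDiffeoOn {E F : Type*} [NormedAddCommGroup E] [NormedSpace ℝ E]
    [NormedAddCommGroup F] [NormedSpace ℝ F] (σ : E → F) (U : Set E) : Prop :=
  IsOpen U ∧ IsOpen (σ '' U) ∧ ContDiffOn ℝ (⊤ : ℕ∞) σ U ∧
    ∃ σinv : F → E, ContDiffOn ℝ (⊤ : ℕ∞) σinv (σ '' U) ∧ ∀ x ∈ U, σinv (σ x) = x

/-- The map-germ of `f` at `p` is diffeomorphic to the map-germ of `g` at `q`:
there are open neighborhoods `U ∋ p`, `V ∋ f p` and `C^∞` diffeomorphisms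
`σ` from `U` onto an open neighborhood of `q`, `τ` from `V` onto an open
neighborhood of `g q`, with `σ p = q`, `τ (f p) = g q`, `f(U) ⊆ V` and
`τ ∘ f = g ∘ σ` on `U`. -/
def GermDiffeomorphic {E F : Type*} [NormedAddCommGroup E] [NormedSpace ℝ E]
    [NormedAddCommGroup F] [NormedSpace ℝ F]
    (f : E → F) (p : E) (g : E → F) (q : E) : Prop :=
  ∃ (U : Set E) (V : Set F) (σ : E → E) (τ : F → F),
    SmoothDiffeoOn σ U ∧ SmoothDiffeoOn τ V ∧
    p ∈ U ∧ f p ∈ V ∧ σ p = q ∧ τ (f p) = g q ∧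
    (∀ x ∈ U, f x ∈ V) ∧ ∀ x ∈ U, τ (f x) = g (σ x)

/-!
Torsionlessness says that the derivative of the frame `(γ', γ'')` is a linear combination of the
frame. Modulo the osculating plane at `t₀` the frame therefore solves a linear differential
equation with zero initial value, so it stays in that plane, and so does the curve. There `γ` is
the graph of a function `φ` with `φ'' ≠ 0`. The point of the tangent line over `u = x + h`, where
`x` is the abscissa of the point of contact, has height
`φ x + h φ' x = φ u - h² R(x, h)` with `R(x, 0) = φ'' x / 2 > 0`. Hence `w = h √R` turns the
tangent surface into `(u, φ u - w²)`, and a shear of the target removes `φ`.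
-/

open Filter Topology
open scoped ContDiff

theorem exists_linearEquiv_apply_eq {K V ι : Type*} [DivisionRing K] [AddCommGroup V]
    [Module K V] [Finite ι] {v w : ι → V} (hv : LinearIndependent K v)
    (hw : LinearIndependent K w) : ∃ e : V ≃ₗ[K] V, ∀ i, e (v i) = w i := by
  have := FiniteDimensional.span_of_finite K (finite_range v)
  obtain ⟨e, he⟩ := Submodule.exists_linearEquiv_restrict_eq
    (hv.linearCombinationEquiv.symm ≪≫ₗ hw.linearCombinationEquiv)
  refine ⟨e, fun i ↦ ?_⟩
  have hvi := hv.linearCombinationEquiv_apply_coe (Finsupp.single i 1)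
  rw [Finsupp.linearCombination_single, one_smul] at hvi
  rw [← hvi, ← he]
  simp

section NormedSpace

variable {𝕜 F ι : Type*} [RCLike 𝕜] [NormedAddCommGroup F] [NormedSpace 𝕜 F]

theorem exists_continuousLinearEquiv_extend {S : Submodule 𝕜 F} [FiniteDimensional 𝕜 S]
    (e : S ≃ₗ[𝕜] S) : ∃ A : F ≃L[𝕜] F, ∀ x : S, A x = e x := by
  obtain ⟨p, hp⟩ := Submodule.ClosedComplemented.of_finiteDimensional S
  let extend (g : S →L[𝕜] S) : F →L[𝕜] F :=
    S.subtypeL ∘L g ∘L p + (ContinuousLinearMap.id 𝕜 F - S.subtypeL ∘L p)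
  let e' := e.toContinuousLinearEquiv
  have extend_comp (g h : S →L[𝕜] S) (hgh : ∀ x, g (h x) = x) (x : F) :
      extend g (extend h x) = x := by
    simp [extend, hp, hgh]
  refine ⟨.equivOfInverse (extend e') (extend e'.symm) (extend_comp _ _ e'.symm_apply_apply)
    (extend_comp _ _ e'.apply_symm_apply), fun x ↦ ?_⟩
  simp [extend, e', hp]

theorem exists_continuousLinearEquiv_apply_eq [Finite ι] {v w : ι → F}
    (hv : LinearIndependent 𝕜 v) (hw : LinearIndependent 𝕜 w) :
    ∃ A : F ≃L[𝕜] F, ∀ i, A (v i) = w i := by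
  let S := Submodule.span 𝕜 (range v ∪ range w)
  have := FiniteDimensional.span_of_finite 𝕜 ((finite_range v).union (finite_range w))
  let v' : ι → S := fun i ↦ ⟨v i, Submodule.subset_span (.inl (mem_range_self i))⟩
  let w' : ι → S := fun i ↦ ⟨w i, Submodule.subset_span (.inr (mem_range_self i))⟩
  obtain ⟨e, he⟩ := exists_linearEquiv_apply_eq (v := v') (w := w')
    (.of_comp S.subtype hv) (.of_comp S.subtype hw)
  obtain ⟨A, hA⟩ := exists_continuousLinearEquiv_extend e
  exact ⟨A, fun i ↦ by simpa [he] using hA (v' i)⟩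

theorem exists_strongDual_apply_eq [Finite ι] {v : ι → F} (hv : LinearIndependent 𝕜 v)
    (c : ι → 𝕜) : ∃ l : StrongDual 𝕜 F, ∀ i, l (v i) = c i := by
  cases nonempty_fintype ι
  obtain ⟨l, hl⟩ := SeparatingDual.dualMap_surjective_iff.2
    (linearIndependent_iff_injective_fintypeLinearCombination.1 hv) (Fintype.linearCombination 𝕜 c)
  refine ⟨l, fun i ↦ ?_⟩
  classical
  simpa using LinearMap.congr_fun hl (Pi.single i 1)

theorem exists_norm_le_mul_norm_sum_smul [Fintype ι] {v : ι → F} (hv : LinearIndependent 𝕜 v) :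
    ∃ C, ∀ᶠ g in 𝓝 v, ∀ c : ι → 𝕜, ‖c‖ ≤ C * ‖∑ i, c i • g i‖ := by
  obtain ⟨K, -, hanti⟩ := LinearMap.exists_antilipschitzWith (Fintype.linearCombination 𝕜 v)
    (LinearMap.ker_eq_bot.2 (linearIndependent_iff_injective_fintypeLinearCombination.1 hv))
  have hsmall : Tendsto (fun g : ι → F ↦ K * ∑ i, ‖v i - g i‖) (𝓝 v) (𝓝 0) := by
    have hcont : Continuous fun g : ι → F ↦ K * ∑ i, ‖v i - g i‖ := by fun_prop
    simpa using hcont.tendsto v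
  refine ⟨2 * K, ?_⟩
  filter_upwards [hsmall.eventually_le_const one_half_pos] with g hg c
  have hdiff : ‖∑ i, c i • (v i - g i)‖ ≤ ‖c‖ * ∑ i, ‖v i - g i‖ := by
    rw [Finset.mul_sum]
    refine norm_sum_le_of_le _ fun i _ ↦ ?_
    rw [norm_smul]
    gcongr
    exact norm_le_pi_norm c i
  have hbound : ‖c‖ ≤ K * ‖∑ i, c i • v i‖ := by
    simpa [Fintype.linearCombination_apply] using hanti.le_mul_norm_sub c 0
  have htri : ‖∑ i, c i • v i‖ ≤ ‖∑ i, c i • g i‖ + ‖∑ i, c i • (v i - g i)‖ := by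
    simpa [smul_sub] using norm_add_le (∑ i, c i • g i) (∑ i, c i • (v i - g i))
  nlinarith [norm_nonneg c, K.coe_nonneg]

end NormedSpace

section Planarity

variable {F : Type*} [NormedAddCommGroup F] [NormedSpace ℝ F] {f f' : ℝ → F} {t₀ K : ℝ}

theorem eventuallyEq_zero_of_eventually_norm_deriv_le (hf : ∀ᶠ t in 𝓝 t₀, HasDerivAt f (f' t) t)
    (hbound : ∀ᶠ t in 𝓝 t₀, ‖f' t‖ ≤ K * ‖f t‖) (h₀ : f t₀ = 0) : f =ᶠ[𝓝 t₀] 0 := by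
  -- `f` and `0` both solve `x' = v t x`; where `f t = 0`, also `f' t = 0`, so `0 / 0` is harmless.
  let v (t : ℝ) (x : F) : F := (‖x‖ / ‖f t‖) • f' t
  have hv_self {t : ℝ} (ht : ‖f' t‖ ≤ K * ‖f t‖) : v t (f t) = f' t := by
    rcases eq_or_ne (f t) 0 with h | h
    · simpa [v, h, eq_comm] using ht
    · simp [v, h]
  have hv_lip {t : ℝ} (ht : ‖f' t‖ ≤ K * ‖f t‖) : LipschitzWith K.toNNReal (v t) := by
    refine LipschitzWith.of_dist_le_mul fun x y ↦ ?_
    have hslope : ‖f' t‖ / ‖f t‖ ≤ K.toNNReal :=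
      div_le_of_le_mul₀ (norm_nonneg _) K.toNNReal.coe_nonneg
        (ht.trans (by gcongr; exact Real.le_coe_toNNReal K))
    calc dist (v t x) (v t y) = ‖f' t‖ / ‖f t‖ * |‖x‖ - ‖y‖| := by
          rw [dist_eq_norm, ← sub_smul, norm_smul, ← sub_div, norm_div, norm_norm, Real.norm_eq_abs]
          ring
      _ ≤ K.toNNReal * dist x y := by
          rw [dist_eq_norm]
          gcongr
          exact abs_norm_sub_norm_le x y
  refine ODE_solution_unique_of_eventually (v := v) (s := fun _ ↦ univ)
    (hbound.mono fun t ht ↦ (hv_lip ht).lipschitzOnWith) ?_ ?_ h₀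
  · filter_upwards [hf, hbound] with t hft ht
    exact ⟨by rwa [hv_self ht], mem_univ _⟩
  · exact .of_forall fun t ↦ ⟨by simp [v], mem_univ _⟩

theorem eventually_mem_span_range_of_deriv_mem_span_range {ι : Type*} [Finite ι]
    {v v' : ℝ → ι → F} (hv : ∀ᶠ t in 𝓝 t₀, HasDerivAt v (v' t) t) (hv' : ContinuousAt v' t₀)
    (hind : LinearIndependent ℝ (v t₀))
    (hspan : ∀ᶠ t in 𝓝 t₀, ∀ i, v' t i ∈ Submodule.span ℝ (range (v t))) :
    ∀ᶠ t in 𝓝 t₀, ∀ i, v t i ∈ Submodule.span ℝ (range (v t₀)) := by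
  cases nonempty_fintype ι
  let S := Submodule.span ℝ (range (v t₀))
  have := FiniteDimensional.span_of_finite ℝ (finite_range (v t₀))
  have : IsClosed (S : Set F) := S.closed_of_finiteDimensional
  let q : (ι → F) →L[ℝ] ι → F ⧸ S := .piMap fun _ ↦ S.mkQL
  obtain ⟨C, hC⟩ := exists_norm_le_mul_norm_sum_smul hind
  have hq₀ : q (v t₀) = 0 := by
    ext i
    exact (Submodule.Quotient.mk_eq_zero S).2 (Submodule.subset_span (mem_range_self i))
  have hbound : ∀ᶠ t in 𝓝 t₀, ‖q (v' t)‖ ≤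
      Fintype.card ι * (|C| * (‖v' t₀‖ + 1)) * ‖q (v t)‖ := by
    filter_upwards [hv.self_of_nhds.continuousAt.eventually hC, hspan,
      hv'.norm.eventually_le_const (lt_add_one ‖v' t₀‖)] with t hCt hspan_t hv't
    refine (pi_norm_le_iff_of_nonneg (by positivity)).2 fun i ↦ ?_
    obtain ⟨c, hc⟩ := (Submodule.mem_span_range_iff_exists_fun ℝ).1 (hspan_t i)
    have hcoeff (j : ι) : ‖c j‖ ≤ |C| * (‖v' t₀‖ + 1) := calc
      ‖c j‖ ≤ C * ‖v' t i‖ := (norm_le_pi_norm c j).trans (hc ▸ hCt c)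
      _ ≤ |C| * (‖v' t₀‖ + 1) := by
        gcongr
        exacts [le_abs_self C, (norm_le_pi_norm (v' t) i).trans hv't]
    calc ‖q (v' t) i‖ = ‖∑ j, c j • q (v t) j‖ := by simp [q, ← hc]
      _ ≤ ∑ _j : ι, |C| * (‖v' t₀‖ + 1) * ‖q (v t)‖ := by
        refine norm_sum_le_of_le _ fun j _ ↦ ?_
        rw [norm_smul]
        gcongr
        exacts [hcoeff j, norm_le_pi_norm (q (v t)) j]
      _ = _ := by simp [mul_assoc]
  have hq := eventuallyEq_zero_of_eventually_norm_deriv_le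
    (hv.mono fun t ht ↦ q.hasFDerivAt.comp_hasDerivAt t ht) hbound hq₀
  filter_upwards [hq] with t ht i
  exact (Submodule.Quotient.mk_eq_zero S).1 (congrFun ht i)

theorem eventually_sub_mem_of_eventually_deriv_mem {S : Submodule ℝ F} [IsClosed (S : Set F)]
    (hf : ∀ᶠ t in 𝓝 t₀, HasDerivAt f (f' t) t) (hS : ∀ᶠ t in 𝓝 t₀, f' t ∈ S) :
    ∀ᶠ t in 𝓝 t₀, f t - f t₀ ∈ S := by
  have hq := eventuallyEq_zero_of_eventually_norm_deriv_le (K := 0) (t₀ := t₀)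
    (hf.mono fun t ht ↦ S.mkQL.hasFDerivAt.comp_hasDerivAt t (ht.sub_const (f t₀)))
    (hS.mono fun t ht ↦ by simp [(Submodule.Quotient.mk_eq_zero S).2 ht]) (by simp)
  filter_upwards [hq] with t ht
  exact (Submodule.Quotient.mk_eq_zero S).1 ht

end Planarity

section ParametricIntegral

variable {H G E : Type*} [NormedAddCommGroup H] [NormedSpace ℝ H] [NormedAddCommGroup G]
  [NormedSpace ℝ G] [NormedAddCommGroup E] [NormedSpace ℝ E]

theorem contDiff_uncurry_fderiv_left {m n : WithTop ℕ∞} {f : H → G → E}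
    (hf : ContDiff ℝ n (Function.uncurry f)) (hmn : m + 1 ≤ n) :
    ContDiff ℝ m (Function.uncurry fun x y ↦ fderiv ℝ (f · y) x) := by
  have hswap : ContDiff ℝ n (Function.uncurry fun (p : H × G) z ↦ f z p.2) :=
    hf.comp (f := fun q : (H × G) × H ↦ (q.2, q.1.2)) (by fun_prop)
  exact hswap.fderiv contDiff_fst hmn

variable {f : H → ℝ → E}

theorem hasFDerivAt_intervalIntegral_of_contDiff [ProperSpace H]
    (hf : ContDiff ℝ 1 (Function.uncurry f)) (a b : ℝ) (x : H) :
    HasFDerivAt (fun x ↦ ∫ t in a..b, f x t) (∫ t in a..b, fderiv ℝ (f · t) x) x := by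
  have hcont := hf.continuous
  have hcont' := (contDiff_uncurry_fderiv_left hf (m := 0) le_rfl).continuous
  obtain ⟨C, hC⟩ := ((isCompact_closedBall x 1).prod isCompact_uIcc).exists_bound_of_continuousOn
    hcont'.continuousOn
  refine intervalIntegral.hasFDerivAt_integral_of_dominated_of_fderiv_le
    (F' := fun x t ↦ fderiv ℝ (f · t) x) (bound := fun _ ↦ C)
    (Metric.closedBall_mem_nhds x one_pos) (.of_forall fun y ↦ ?_) ?_ ?_ ?_ ?_ ?_
  · exact (hcont.uncurry_left y).aestronglyMeasurable
  · exact (hcont.uncurry_left x).intervalIntegrable _ _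
  · exact (hcont'.uncurry_left x).aestronglyMeasurable
  · exact .of_forall fun t ht y hy ↦ hC (y, t) ⟨hy, uIoc_subset_uIcc ht⟩
  · exact intervalIntegrable_const
  · refine .of_forall fun t _ y _ ↦ DifferentiableAt.hasFDerivAt ?_
    exact (hf.differentiable one_ne_zero).comp (by fun_prop : Differentiable ℝ fun y ↦ (y, t)) y

theorem contDiff_intervalIntegral_nat [FiniteDimensional ℝ H] {n : ℕ}
    (hf : ContDiff ℝ n (Function.uncurry f)) (a b : ℝ) :
    ContDiff ℝ n fun x ↦ ∫ t in a..b, f x t := by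
  have := FiniteDimensional.proper_real H
  induction n generalizing f with
  | zero =>
    exact contDiff_zero.2
      (intervalIntegral.continuous_parametric_intervalIntegral_of_continuous' hf.continuous a b)
  | succ n ih =>
    push_cast at hf ⊢
    have hderiv := hasFDerivAt_intervalIntegral_of_contDiff (hf.of_le (by simp)) a b
    have hf' := contDiff_uncurry_fderiv_left hf le_rfl
    refine contDiff_succ_iff_fderiv_apply.2
      ⟨fun x ↦ (hderiv x).differentiableAt, by simp, fun y ↦ ?_⟩
    have hderiv_apply (x : H) : fderiv ℝ (fun x ↦ ∫ t in a..b, f x t) x y =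
        ∫ t in a..b, fderiv ℝ (f · t) x y := by
      rw [(hderiv x).fderiv]
      exact ContinuousLinearMap.intervalIntegral_apply
        ((hf'.continuous.uncurry_left x).intervalIntegrable a b) y
    simpa only [hderiv_apply] using
      ih (f := fun x t ↦ fderiv ℝ (f · t) x y) (hf'.clm_apply contDiff_const)

theorem contDiff_intervalIntegral [FiniteDimensional ℝ H] {n : ℕ∞}
    (hf : ContDiff ℝ n (Function.uncurry f)) (a b : ℝ) :
    ContDiff ℝ n fun x ↦ ∫ t in a..b, f x t :=
  contDiff_iff_forall_nat_le.2 fun _ hk ↦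
    contDiff_intervalIntegral_nat (hf.of_le (mod_cast hk)) a b

end ParametricIntegral

theorem exists_contDiff_taylor_remainder {E : Type*} [NormedAddCommGroup E] [NormedSpace ℝ E]
    [CompleteSpace E] {φ : ℝ → E} (hφ : ContDiff ℝ ∞ φ) (n : ℕ) :
    ∃ R : ℝ × ℝ → E, ContDiff ℝ ∞ R ∧
      (∀ u, R (u, 0) = ((n + 1).factorial : ℝ)⁻¹ • iteratedDeriv (n + 1) φ u) ∧
      ∀ u h, φ (u + h) =
        ∑ k ∈ Finset.range (n + 1), (h ^ k / k.factorial) • iteratedDeriv k φ u +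
          h ^ (n + 1) • R (u, h) := by
  have hsmooth : ContDiff ℝ ∞ (iteratedDeriv (n + 1) φ) := by
    simpa only [iteratedDeriv_eq_iterate] using hφ.iterate_deriv (n + 1)
  refine ⟨fun p ↦ (n.factorial : ℝ)⁻¹ • ∫ t in (0 : ℝ)..1,
    (1 - t) ^ n • iteratedDeriv (n + 1) φ (p.1 + t * p.2), ?_, fun u ↦ ?_, fun u h ↦ ?_⟩
  · have hintegrand : ContDiff ℝ ∞ (Function.uncurry fun (p : ℝ × ℝ) t ↦
        (1 - t) ^ n • iteratedDeriv (n + 1) φ (p.1 + t * p.2)) := by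
      unfold Function.uncurry
      fun_prop
    exact contDiff_const.smul (contDiff_intervalIntegral hintegrand 0 1)
  · have hweight : ∫ t in (0 : ℝ)..1, (1 - t) ^ n = ((n : ℝ) + 1)⁻¹ := by
      simp [intervalIntegral.integral_comp_sub_left (fun t : ℝ ↦ t ^ n) 1]
    simp only [mul_zero, add_zero]
    rw [intervalIntegral.integral_smul_const, hweight, smul_smul, Nat.factorial_succ]
    push_cast
    rw [mul_inv, mul_comm]
  · rw [map_add_eq_sum_add_integral_iteratedFDeriv (n := n)
      fun t _ ↦ hφ.contDiffAt.of_le (mod_cast le_top)]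
    simp only [iteratedFDeriv_apply_eq_iteratedDeriv_mul_prod, Finset.prod_const, Finset.card_univ,
      Fintype.card_fin, smul_eq_mul]
    rw [smul_comm (h ^ (n + 1)), ← intervalIntegral.integral_smul (h ^ (n + 1))]
    simp only [smul_smul, div_eq_inv_mul, mul_comm (h ^ (n + 1))]

theorem exists_contDiff_eventuallyEq {E F : Type*} [NormedAddCommGroup E] [NormedSpace ℝ E]
    [FiniteDimensional ℝ E] [NormedAddCommGroup F] [NormedSpace ℝ F] {n : ℕ∞} {f : E → F} {p : E}
    (hf : ∀ᶠ x in 𝓝 p, ContDiffAt ℝ n f x) : ∃ g, ContDiff ℝ n g ∧ g =ᶠ[𝓝 p] f := by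
  obtain ⟨r, hr, hball⟩ := Metric.eventually_nhds_iff_ball.1 hf
  let b : ContDiffBump p := ⟨r / 4, r / 2, by positivity, by linarith⟩
  refine ⟨fun x ↦ b x • f x, contDiff_iff_contDiffAt.2 fun x ↦ ?_, ?_⟩
  · by_cases hx : x ∈ Metric.ball p r
    · exact b.contDiffAt.smul (hball x hx)
    · have hx' : x ∉ tsupport b := fun h ↦ hx <|
        Metric.closedBall_subset_ball (half_lt_self hr) (b.tsupport_eq ▸ h)
      refine (contDiffAt_const (c := (0 : F))).congr_of_eventuallyEq ?_
      filter_upwards [notMem_tsupport_iff_eventuallyEq.1 hx'] with y hy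
      simp [hy]
  · filter_upwards [b.eventuallyEq_one] with x hx
    simp [hx]

section SmoothDiffeoOn

variable {E F : Type*} [NormedAddCommGroup E] [NormedSpace ℝ E]
  [NormedAddCommGroup F] [NormedSpace ℝ F]

theorem SmoothDiffeoOn.of_inverse {σ : E → F} {ρ : F → E} (hσ : ContDiff ℝ ∞ σ)
    (hρ : ContDiff ℝ ∞ ρ) (hleft : Function.LeftInverse ρ σ) (hright : Function.RightInverse ρ σ) :
    SmoothDiffeoOn σ univ := by
  refine ⟨isOpen_univ, ?_, hσ.contDiffOn, ρ, hρ.contDiffOn, fun x _ ↦ hleft x⟩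
  rw [image_univ_of_surjective hright.surjective]
  exact isOpen_univ

theorem SmoothDiffeoOn.exists_subset_of_hasFDerivAt [CompleteSpace E] {σ : E → F} {p : E}
    {A : E ≃L[ℝ] F} (hσ : ∀ᶠ x in 𝓝 p, ContDiffAt ℝ ∞ σ x)
    (hA : HasFDerivAt σ (A : E →L[ℝ] F) p) {W : Set E} (hW : W ∈ 𝓝 p) :
    ∃ U ⊆ W, p ∈ U ∧ SmoothDiffeoOn σ U := by
  have hp := hσ.self_of_nhds
  let e := hp.toOpenPartialHomeomorph σ hA (by simp)
  have hsource : e.source ∈ 𝓝 p :=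
    e.open_source.mem_nhds (hp.mem_toOpenPartialHomeomorph_source hA (by simp))
  have hinvertible : ∀ᶠ x in 𝓝 p,
      fderiv ℝ σ x ∈ range ((↑) : (E ≃L[ℝ] F) → E →L[ℝ] F) := by
    refine (hp.fderiv_right (m := 0) (by simp)).continuousAt.eventually_mem ?_
    exact hA.fderiv ▸ ContinuousLinearEquiv.nhds A
  obtain ⟨U, hU, hUopen, hpU⟩ := mem_nhds_iff.1
    (inter_mem (inter_mem hW hsource) (hσ.and hinvertible))
  refine ⟨U, fun x hx ↦ (hU hx).1.1, hpU, hUopen,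
    e.isOpen_image_of_subset_source hUopen fun x hx ↦ (hU hx).1.2,
    fun x hx ↦ (hU hx).2.1.contDiffWithinAt, e.symm, ?_, fun x hx ↦ e.left_inv (hU hx).1.2⟩
  rintro _ ⟨x, hx, rfl⟩
  obtain ⟨⟨-, hxe⟩, hσx, B, hB⟩ := hU hx
  refine (e.contDiffAt_symm (f₀' := B) (e.map_source hxe) ?_ ?_).contDiffWithinAt
  · rw [e.left_inv hxe, hB]
    exact (hσx.differentiableAt (by simp)).hasFDerivAt
  · rwa [e.left_inv hxe]

theorem GermDiffeomorphic.of_eventually [CompleteSpace E] {f g : E → F} {p : E} {σ : E → E}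
    {τ : F → F} {A : E ≃L[ℝ] E} (hσ : ∀ᶠ x in 𝓝 p, ContDiffAt ℝ ∞ σ x)
    (hA : HasFDerivAt σ (A : E →L[ℝ] E) p) (hτ : SmoothDiffeoOn τ univ)
    (hcomm : ∀ᶠ x in 𝓝 p, τ (f x) = g (σ x)) : GermDiffeomorphic f p g (σ p) := by
  obtain ⟨U, hU, hpU, hσU⟩ := SmoothDiffeoOn.exists_subset_of_hasFDerivAt hσ hA hcomm
  exact ⟨U, univ, σ, τ, hσU, hτ, hpU, mem_univ _, rfl, hU hpU, fun _ _ ↦ mem_univ _, hU⟩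

end SmoothDiffeoOn

theorem exists_contDiff_comp_eventuallyEq {E F G : Type*} [NormedAddCommGroup E] [NormedSpace ℝ E]
    [NormedAddCommGroup F] [NormedSpace ℝ F] [FiniteDimensional ℝ F]
    [NormedAddCommGroup G] [NormedSpace ℝ G] {x : E → F} {y : E → G} {p : E} {A : E ≃L[ℝ] F}
    (hx : ∀ᶠ t in 𝓝 p, ContDiffAt ℝ ∞ x t) (hA : HasFDerivAt x (A : E →L[ℝ] F) p)
    (hy : ∀ᶠ t in 𝓝 p, ContDiffAt ℝ ∞ y t) :
    ∃ φ : F → G, ContDiff ℝ ∞ φ ∧ y =ᶠ[𝓝 p] φ ∘ x := by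
  have := A.symm.toLinearEquiv.finiteDimensional
  have := FiniteDimensional.complete ℝ E
  obtain ⟨U, hU, hpU, hUopen, hVopen, -, ρ, hρ, hρx⟩ :=
    SmoothDiffeoOn.exists_subset_of_hasFDerivAt hx hA hy
  have hV : ∀ᶠ z in 𝓝 (x p), ContDiffAt ℝ ∞ (y ∘ ρ) z := by
    filter_upwards [hVopen.mem_nhds (mem_image_of_mem x hpU)] with z hz
    refine ContDiffAt.comp z ?_ (hρ.contDiffAt (hVopen.mem_nhds hz))
    obtain ⟨t, ht, rfl⟩ := hz
    rw [hρx t ht]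
    exact hU ht
  obtain ⟨φ, hφ, hφρ⟩ := exists_contDiff_eventuallyEq hV
  refine ⟨φ, hφ, ?_⟩
  filter_upwards [hA.continuousAt.eventually hφρ, hUopen.mem_nhds hpU] with t ht htU
  simp [ht, hρx t htU]

theorem deriv_deriv_comp {E : Type*} [NormedAddCommGroup E] [NormedSpace ℝ E] {φ : ℝ → E}
    {x : ℝ → ℝ} {t : ℝ} (hφ : ContDiffAt ℝ 2 φ (x t)) (hx : ContDiffAt ℝ 2 x t) :
    deriv (deriv (φ ∘ x)) t =
      deriv (deriv x) t • deriv φ (x t) + deriv x t ^ 2 • deriv (deriv φ) (x t) := by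
  have hφ_diff : ∀ᶠ u in 𝓝 (x t), DifferentiableAt ℝ φ u :=
    (hφ.eventually (by simp)).mono fun u hu ↦ hu.differentiableAt two_ne_zero
  have hx_diff : ∀ᶠ s in 𝓝 t, DifferentiableAt ℝ x s :=
    (hx.eventually (by simp)).mono fun s hs ↦ hs.differentiableAt two_ne_zero
  have hderiv : deriv (φ ∘ x) =ᶠ[𝓝 t] fun s ↦ deriv x s • deriv φ (x s) := by
    filter_upwards [hx_diff, hx.continuousAt.eventually hφ_diff] with s hs hφs
    exact deriv.scomp s hφs hs
  have hφ' : HasDerivAt (deriv φ) (deriv (deriv φ) (x t)) (x t) :=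
    ((hφ.derivWithin (m := 1) (by norm_num)).differentiableAt one_ne_zero).hasDerivAt
  have hx' : HasDerivAt (deriv x) (deriv (deriv x) t) t :=
    ((hx.derivWithin (m := 1) (by norm_num)).differentiableAt one_ne_zero).hasDerivAt
  have hsmul := hx'.smul (hφ'.scomp t hx_diff.self_of_nhds.hasDerivAt)
  rw [smul_smul, ← sq, add_comm] at hsmul
  exact hderiv.deriv_eq.trans hsmul.deriv

theorem deriv_deriv_continuousLinearMap_comp {E G : Type*} [NormedAddCommGroup E]
    [NormedSpace ℝ E] [NormedAddCommGroup G] [NormedSpace ℝ G] (l : E →L[ℝ] G) {f : ℝ → E} {t : ℝ}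
    (hf : ContDiffAt ℝ 2 f t) : deriv (deriv fun s ↦ l (f s)) t = l (deriv (deriv f) t) := by
  have hderiv : deriv (fun s ↦ l (f s)) =ᶠ[𝓝 t] fun s ↦ l (deriv f s) := by
    filter_upwards [hf.eventually (by simp)] with s hs
    exact (l.hasFDerivAt.comp_hasDerivAt s (hs.differentiableAt two_ne_zero).hasDerivAt).deriv
  have hf' := ((hf.derivWithin (m := 1) (by norm_num)).differentiableAt one_ne_zero).hasDerivAt
  exact hderiv.deriv_eq.trans (l.hasFDerivAt.comp_hasDerivAt t hf').deriv

theorem exists_smoothDiffeoOn_shear {F : Type*} [NormedAddCommGroup F] [NormedSpace ℝ F]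
    {v w e₁ e₂ : F} (hvw : LinearIndependent ℝ ![v, w]) (he : LinearIndependent ℝ ![e₁, e₂])
    {φ : ℝ → ℝ} (hφ : ContDiff ℝ ∞ φ) (c : F) :
    ∃ τ : F → F, SmoothDiffeoOn τ univ ∧
      ∀ u k, τ (c + u • v + (φ u - k) • w) = u • e₁ + k • e₂ := by
  obtain ⟨a, ha⟩ := exists_strongDual_apply_eq hvw ![1, 0]
  obtain ⟨M, hM⟩ := exists_continuousLinearEquiv_apply_eq hvw
    ((LinearIndependent.pair_neg_right_iff).2 he)
  obtain ⟨hav, haw⟩ : a v = 1 ∧ a w = 0 := by simpa using ha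
  obtain ⟨hMv, hMw⟩ : M v = e₁ ∧ M w = -e₂ := by simpa using hM
  refine ⟨fun z ↦ M (z - c - φ (a (z - c)) • w), ?_, fun u k ↦ ?_⟩
  · refine SmoothDiffeoOn.of_inverse (ρ := fun z ↦ c + M.symm z + φ (a (M.symm z)) • w)
      (by fun_prop) (by fun_prop) (fun z ↦ ?_) fun z ↦ ?_
    · simp only [ContinuousLinearEquiv.symm_apply_apply, map_sub, map_smul, haw, smul_zero,
        sub_zero]
      abel
    · simp [haw, add_assoc]
  · simp [add_assoc, sub_smul, hav, haw, hMv, hMw]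

/-- The ruled surface swept out by the tangent lines of `γ`, parametrized by the point `t` of
contact and the coordinate `s` along the tangent line. -/
def tangentSurface {F : Type*} [NormedAddCommGroup F] [NormedSpace ℝ F] (γ : ℝ → F)
    (p : ℝ × ℝ) : F :=
  γ p.1 + p.2 • deriv γ p.1

/-- The fold `(u, w) ↦ (u, w², 0, …)`, written without coordinates: `e₁` and `e₂` are the first two
vectors of a frame of the target. -/
def fold {F : Type*} [AddCommGroup F] [Module ℝ F] (e₁ e₂ : F) (p : ℝ × ℝ) : F :=
  p.1 • e₁ + p.2 ^ 2 • e₂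

theorem fold_single {ι : Type*} [DecidableEq ι] {i j : ι} (hij : i ≠ j) :
    fold (Pi.single i (1 : ℝ)) (Pi.single j 1) =
      fun p k ↦ if k = i then p.1 else if k = j then p.2 ^ 2 else 0 := by
  ext p k
  simp only [fold, Pi.add_apply, Pi.smul_apply, Pi.single_apply, smul_eq_mul]
  grind

/-- Fold coordinates `(u, w)` on the source of the tangent surface of a graph `t ↦ (x t, φ (x t))`
where `φ (a + h) = φ a + h φ' a + h² R(a, h)`: `u` is the abscissa of the point of the surface, and
`w²` is its vertical distance to the curve. -/
def foldChart (x : ℝ → ℝ) (R : ℝ × ℝ → ℝ) (p : ℝ × ℝ) : ℝ × ℝ :=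
  (x p.1 + p.2 * deriv x p.1, p.2 * (deriv x p.1 * √(R (x p.1, p.2 * deriv x p.1))))

section foldChart

variable {x : ℝ → ℝ} {R : ℝ × ℝ → ℝ} {t₀ : ℝ}

theorem foldChart_zero_right (t : ℝ) : foldChart x R (t, 0) = (x t, 0) := by
  simp [foldChart]

theorem foldChart_snd_sq {p : ℝ × ℝ} (hR : 0 ≤ R (x p.1, p.2 * deriv x p.1)) :
    (foldChart x R p).2 ^ 2 = (p.2 * deriv x p.1) ^ 2 * R (x p.1, p.2 * deriv x p.1) := by
  rw [foldChart, ← mul_assoc, mul_pow, Real.sq_sqrt hR]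

theorem contDiffAt_deriv_mul_sqrt {p : ℝ × ℝ} (hx : ContDiffAt ℝ ∞ x p.1) (hR : ContDiff ℝ ∞ R)
    (hne : R (x p.1, p.2 * deriv x p.1) ≠ 0) :
    ContDiffAt ℝ ∞ (fun p ↦ deriv x p.1 * √(R (x p.1, p.2 * deriv x p.1))) p := by
  have hx₁ : ContDiffAt ℝ ∞ (fun p : ℝ × ℝ ↦ x p.1) p := hx.comp p contDiffAt_fst
  have hx'₁ : ContDiffAt ℝ ∞ (fun p : ℝ × ℝ ↦ deriv x p.1) p :=
    (hx.derivWithin le_rfl).comp p contDiffAt_fst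
  exact hx'₁.mul (ContDiffAt.sqrt
    (hR.contDiffAt.comp p (hx₁.prodMk (contDiffAt_snd.mul hx'₁))) hne)

theorem contDiffAt_foldChart {p : ℝ × ℝ} (hx : ContDiffAt ℝ ∞ x p.1) (hR : ContDiff ℝ ∞ R)
    (hne : R (x p.1, p.2 * deriv x p.1) ≠ 0) : ContDiffAt ℝ ∞ (foldChart x R) p := by
  have hx₁ : ContDiffAt ℝ ∞ (fun p : ℝ × ℝ ↦ x p.1) p := hx.comp p contDiffAt_fst
  have hx'₁ : ContDiffAt ℝ ∞ (fun p : ℝ × ℝ ↦ deriv x p.1) p :=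
    (hx.derivWithin le_rfl).comp p contDiffAt_fst
  exact (hx₁.add (contDiffAt_snd.mul hx'₁)).prodMk
    (contDiffAt_snd.mul (contDiffAt_deriv_mul_sqrt hx hR hne))

theorem exists_equiv_hasFDerivAt_foldChart (hx : ContDiffAt ℝ ∞ x t₀) (hx' : deriv x t₀ ≠ 0)
    (hR : ContDiff ℝ ∞ R) (hpos : 0 < R (x t₀, 0)) :
    ∃ A : (ℝ × ℝ) ≃L[ℝ] ℝ × ℝ,
      HasFDerivAt (foldChart x R) (A : ℝ × ℝ →L[ℝ] ℝ × ℝ) (t₀, 0) := by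
  set a := deriv x t₀
  set c := a * √(R (x t₀, 0))
  have hc : c ≠ 0 := by positivity
  let dt := ContinuousLinearMap.fst ℝ ℝ ℝ
  let ds := ContinuousLinearMap.snd ℝ ℝ ℝ
  let L : ℝ × ℝ →L[ℝ] ℝ × ℝ := (a • (dt + ds)).prod (c • ds)
  have hL : Function.Injective L := by
    refine (injective_iff_map_eq_zero L).2 fun ⟨u, w⟩ h ↦ ?_
    obtain ⟨huw, rfl⟩ : u + w = 0 ∧ w = 0 := by
      simpa [L, dt, ds, ← mul_add, hx', hc, a] using h
    simpa using huw
  have hfst : HasFDerivAt (fun p : ℝ × ℝ ↦ p.1) dt (t₀, 0) := hasFDerivAt_fst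
  have hsnd : HasFDerivAt (fun p : ℝ × ℝ ↦ p.2) ds (t₀, 0) := hasFDerivAt_snd
  have hsnd_mul {g : ℝ × ℝ → ℝ} (hg : DifferentiableAt ℝ g (t₀, 0)) :
      HasFDerivAt (fun p ↦ p.2 * g p) (g (t₀, 0) • ds) (t₀, 0) := by
    have hmul := hsnd.mul hg.hasFDerivAt
    rw [zero_smul, zero_add] at hmul
    exact hmul
  have hu : HasFDerivAt (fun p : ℝ × ℝ ↦ x p.1 + p.2 * deriv x p.1) (a • (dt + ds)) (t₀, 0) := by
    have hx'_diff : DifferentiableAt ℝ (deriv x) t₀ :=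
      (hx.derivWithin (m := ∞) le_rfl).differentiableAt (by simp)
    have hx'_fst : DifferentiableAt ℝ (deriv x ∘ Prod.fst) (t₀, (0 : ℝ)) :=
      hx'_diff.comp _ differentiableAt_fst
    rw [smul_add]
    exact ((hx.differentiableAt (by simp)).hasDerivAt.comp_hasFDerivAt (t₀, 0) hfst).add
      (hsnd_mul hx'_fst)
  have hw := hsnd_mul ((contDiffAt_deriv_mul_sqrt (p := (t₀, 0)) hx hR
    (by simpa using hpos.ne')).differentiableAt (by simp))
  refine ⟨(LinearEquiv.ofInjectiveEndo L.toLinearMap hL).toContinuousLinearEquiv, ?_⟩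
  have hσ := hu.prodMk hw
  simp only [zero_mul] at hσ
  exact hσ

end foldChart

section TangentSurface

variable {F : Type*} [NormedAddCommGroup F] [NormedSpace ℝ F] {γ : ℝ → F} {t₀ : ℝ}
  {v w e₁ e₂ : F}

theorem tangentSurface_graph {x φ : ℝ → ℝ} {R : ℝ × ℝ → ℝ} {t : ℝ} (s : ℝ) {c : F}
    (hx : DifferentiableAt ℝ x t) (hφ : DifferentiableAt ℝ φ (x t))
    (hR : ∀ h, φ (x t + h) = φ (x t) + h * deriv φ (x t) + h ^ 2 * R (x t, h))
    (hnonneg : 0 ≤ R (x t, s * deriv x t)) :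
    tangentSurface (fun t ↦ c + x t • v + φ (x t) • w) (t, s) =
      c + (foldChart x R (t, s)).1 • v +
        (φ (foldChart x R (t, s)).1 - (foldChart x R (t, s)).2 ^ 2) • w := by
  have hderiv : deriv (fun t ↦ c + x t • v + φ (x t) • w) t =
      deriv x t • v + (deriv φ (x t) * deriv x t) • w :=
    (((hx.hasDerivAt.smul_const v).const_add c).add
      ((hφ.hasDerivAt.comp t hx.hasDerivAt).smul_const w)).deriv
  rw [foldChart_snd_sq hnonneg]
  simp only [tangentSurface, foldChart, hderiv, hR]
  module

theorem germDiffeomorphic_tangentSurface_fold_of_graph {x φ : ℝ → ℝ} {c : F}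
    (hγ : γ =ᶠ[𝓝 t₀] fun t ↦ c + x t • v + φ (x t) • w)
    (hx : ∀ᶠ t in 𝓝 t₀, ContDiffAt ℝ ∞ x t) (hx' : deriv x t₀ ≠ 0)
    (hφ : ContDiff ℝ ∞ φ) (hφ'' : 0 < deriv (deriv φ) (x t₀))
    (hvw : LinearIndependent ℝ ![v, w]) (he : LinearIndependent ℝ ![e₁, e₂]) :
    GermDiffeomorphic (tangentSurface γ) (t₀, 0) (fold e₁ e₂) (x t₀, 0) := by
  obtain ⟨R, hR, hR₀, hRφ⟩ := exists_contDiff_taylor_remainder hφ 1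
  have hpos₀ : 0 < R (x t₀, 0) := by
    rw [hR₀, iteratedDeriv_succ, iteratedDeriv_one]
    positivity
  have hfst : Tendsto Prod.fst (𝓝 (t₀, (0 : ℝ))) (𝓝 t₀) := continuousAt_fst
  have hpos : ∀ᶠ p : ℝ × ℝ in 𝓝 (t₀, 0), 0 < R (x p.1, p.2 * deriv x p.1) := by
    have hx₀ := hx.self_of_nhds
    have hx₀' : ContinuousAt (deriv x) t₀ := (hx₀.derivWithin (m := 0) (by simp)).continuousAt
    have hcont : ContinuousAt (fun p : ℝ × ℝ ↦ R (x p.1, p.2 * deriv x p.1)) (t₀, 0) :=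
      hR.continuous.continuousAt.comp (.prodMk (.comp hx₀.continuousAt hfst)
        (.mul continuousAt_snd (.comp (g := deriv x) hx₀' hfst)))
    exact hcont.eventually_const_lt (by simpa using hpos₀)
  obtain ⟨A, hA⟩ := exists_equiv_hasFDerivAt_foldChart hx.self_of_nhds hx' hR hpos₀
  obtain ⟨τ, hτ, hτ_graph⟩ := exists_smoothDiffeoOn_shear hvw he hφ c
  rw [← foldChart_zero_right (R := R)]
  refine .of_eventually ?_ hA hτ ?_
  · filter_upwards [hfst.eventually hx, hpos] with p hxp hp
    exact contDiffAt_foldChart hxp hR hp.ne'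
  · filter_upwards [hfst.eventually hx, hfst.eventually hγ.eventuallyEq_nhds, hpos]
      with ⟨t, s⟩ hxt hγt hp
    have htangent : tangentSurface γ (t, s) =
        tangentSurface (fun t ↦ c + x t • v + φ (x t) • w) (t, s) := by
      simp only [tangentSurface, hγt.self_of_nhds, hγt.deriv_eq]
    rw [htangent, tangentSurface_graph s (hxt.differentiableAt (by simp))
      (hφ.differentiable (by simp) _) (fun h ↦ ?_) hp.le, hτ_graph, fold]
    simpa [Finset.sum_range_succ] using hRφ (x t) h

theorem eventually_sub_mem_osculatingPlane (hγ : ContDiffAt ℝ 3 γ t₀)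
    (hind : LinearIndependent ℝ ![deriv γ t₀, deriv (deriv γ) t₀])
    (hdep : ∀ᶠ t in 𝓝 t₀,
      deriv (deriv (deriv γ)) t ∈ Submodule.span ℝ {deriv γ t, deriv (deriv γ) t}) :
    ∀ᶠ t in 𝓝 t₀, γ t - γ t₀ ∈ Submodule.span ℝ {deriv γ t₀, deriv (deriv γ) t₀} := by
  have hγ₁ : ContDiffAt ℝ 2 (deriv γ) t₀ := hγ.derivWithin (by norm_num)
  have hγ₂ : ContDiffAt ℝ 1 (deriv (deriv γ)) t₀ := hγ₁.derivWithin (by norm_num)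
  have hγ₃ : ContinuousAt (deriv (deriv (deriv γ))) t₀ :=
    (hγ₂.derivWithin (m := 0) (by norm_num)).continuousAt
  have hasDerivAt_deriv {f : ℝ → F} {n : WithTop ℕ∞} (hf : ContDiffAt ℝ n f t₀) (hn : n ≠ 0)
      (hn' : n ≠ ∞) : ∀ᶠ t in 𝓝 t₀, HasDerivAt f (deriv f t) t :=
    (hf.eventually hn').mono fun t ht ↦ (ht.differentiableAt hn).hasDerivAt
  have hframe := eventually_mem_span_range_of_deriv_mem_span_range
    (v := fun t ↦ ![deriv γ t, deriv (deriv γ) t])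
    (v' := fun t ↦ ![deriv (deriv γ) t, deriv (deriv (deriv γ)) t]) (t₀ := t₀) ?_ ?_ hind ?_
  · simp only [Matrix.range_cons_cons_empty] at hframe
    have := FiniteDimensional.span_of_finite ℝ (toFinite {deriv γ t₀, deriv (deriv γ) t₀})
    have := (Submodule.span ℝ {deriv γ t₀, deriv (deriv γ) t₀}).closed_of_finiteDimensional
    exact eventually_sub_mem_of_eventually_deriv_mem (hasDerivAt_deriv hγ (by simp) (by simp))
      (hframe.mono fun t ht ↦ ht 0)
  · filter_upwards [hasDerivAt_deriv hγ₁ (by simp) (by simp),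
      hasDerivAt_deriv hγ₂ (by simp) (by simp)] with t h₁ h₂
    exact hasDerivAt_pi.2 <| Fin.forall_fin_two.2 ⟨h₁, h₂⟩
  · exact continuousAt_pi.2 <| Fin.forall_fin_two.2 ⟨hγ₂.continuousAt, hγ₃⟩
  · filter_upwards [hdep] with t ht
    rw [Matrix.range_cons_cons_empty]
    exact Fin.forall_fin_two.2 ⟨Submodule.subset_span (by simp), ht⟩

theorem exists_osculatingPlane_coordinates (hγ : ∀ᶠ t in 𝓝 t₀, ContDiffAt ℝ ∞ γ t)
    (hind : LinearIndependent ℝ ![deriv γ t₀, deriv (deriv γ) t₀])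
    (hdep : ∀ᶠ t in 𝓝 t₀,
      deriv (deriv (deriv γ)) t ∈ Submodule.span ℝ {deriv γ t, deriv (deriv γ) t}) :
    ∃ x y : ℝ → ℝ, (∀ᶠ t in 𝓝 t₀, ContDiffAt ℝ ∞ x t) ∧ (∀ᶠ t in 𝓝 t₀, ContDiffAt ℝ ∞ y t) ∧
      x t₀ = 0 ∧ deriv x t₀ = 1 ∧ deriv (deriv x) t₀ = 0 ∧ deriv (deriv y) t₀ = 1 ∧
      γ =ᶠ[𝓝 t₀] fun t ↦ γ t₀ + x t • deriv γ t₀ + y t • deriv (deriv γ) t₀ := by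
  obtain ⟨a, ha⟩ := exists_strongDual_apply_eq hind ![1, 0]
  obtain ⟨b, hb⟩ := exists_strongDual_apply_eq hind ![0, 1]
  obtain ⟨ha₁, ha₂⟩ : a (deriv γ t₀) = 1 ∧ a (deriv (deriv γ) t₀) = 0 := by simpa using ha
  obtain ⟨hb₁, hb₂⟩ : b (deriv γ t₀) = 0 ∧ b (deriv (deriv γ) t₀) = 1 := by simpa using hb
  have contDiffAt_coord (l : StrongDual ℝ F) :
      ∀ᶠ t in 𝓝 t₀, ContDiffAt ℝ ∞ (fun t ↦ l (γ t - γ t₀)) t :=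
    hγ.mono fun t ht ↦ l.contDiff.contDiffAt.comp t (ht.sub contDiffAt_const)
  have deriv_deriv_coord (l : StrongDual ℝ F) :
      deriv (deriv fun t ↦ l (γ t - γ t₀)) t₀ = l (deriv (deriv γ) t₀) := by
    simpa only [deriv_sub_const_fun] using
      deriv_deriv_continuousLinearMap_comp l
        ((hγ.self_of_nhds.of_le (WithTop.coe_le_coe.2 le_top)).sub contDiffAt_const)
  refine ⟨fun t ↦ a (γ t - γ t₀), fun t ↦ b (γ t - γ t₀), contDiffAt_coord a, contDiffAt_coord b,
    by simp, ?_, by rw [deriv_deriv_coord, ha₂], by rw [deriv_deriv_coord, hb₂], ?_⟩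
  · have hγ' := (hγ.self_of_nhds.differentiableAt (by simp)).hasDerivAt
    exact (a.hasFDerivAt.comp_hasDerivAt t₀ (hγ'.sub_const (γ t₀))).deriv.trans ha₁
  · filter_upwards [eventually_sub_mem_osculatingPlane
      (hγ.self_of_nhds.of_le (WithTop.coe_le_coe.2 le_top)) hind hdep] with t ht
    obtain ⟨c, d, hcd⟩ := Submodule.mem_span_pair.1 ht
    have ha_cd : a (γ t - γ t₀) = c := by rw [← hcd]; simp [ha₁, ha₂]
    have hb_cd : b (γ t - γ t₀) = d := by rw [← hcd]; simp [hb₁, hb₂]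
    rw [ha_cd, hb_cd, add_assoc, hcd, add_sub_cancel]

theorem torsionless_flat_tangent_surface_is_fold_general
    (hγ : ∀ᶠ t in 𝓝 t₀, ContDiffAt ℝ ∞ γ t)
    (hind : LinearIndependent ℝ ![deriv γ t₀, deriv (deriv γ) t₀])
    (hdep : ∀ᶠ t in 𝓝 t₀,
      deriv (deriv (deriv γ)) t ∈ Submodule.span ℝ {deriv γ t, deriv (deriv γ) t})
    (he : LinearIndependent ℝ ![e₁, e₂]) :
    GermDiffeomorphic (tangentSurface γ) (t₀, 0) (fold e₁ e₂) (0, 0) := by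
  obtain ⟨x, y, hx, hy, hx₀, hx', hx'', hy'', hγxy⟩ :=
    exists_osculatingPlane_coordinates hγ hind hdep
  have hx'_ne : deriv x t₀ ≠ 0 := hx' ▸ one_ne_zero
  obtain ⟨φ, hφ, hyφ⟩ := exists_contDiff_comp_eventuallyEq hx
    ((hx.self_of_nhds.differentiableAt (by simp)).hasDerivAt.hasFDerivAt_equiv hx'_ne) hy
  have hgraph : γ =ᶠ[𝓝 t₀] fun t ↦ γ t₀ + x t • deriv γ t₀ + φ (x t) • deriv (deriv γ) t₀ := by
    filter_upwards [hγxy, hyφ] with t hγt hyt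
    rwa [hyt, Function.comp_apply] at hγt
  have hφ'' : deriv (deriv φ) (x t₀) = 1 := by
    have hchain := deriv_deriv_comp (φ := φ) (hφ.contDiffAt.of_le (WithTop.coe_le_coe.2 le_top))
      (hx.self_of_nhds.of_le (WithTop.coe_le_coe.2 le_top))
    simpa [← hyφ.deriv.deriv_eq, hx', hx'', hy''] using hchain.symm
  simpa only [hx₀] using
    germDiffeomorphic_tangentSurface_fold_of_graph hgraph hx hx'_ne hφ (hφ'' ▸ one_pos)
      hind he

end TangentSurface

/-- If `γ : I → ℝ^m` (`m ≥ 3`) is `C^∞` on an open interval with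
`γ'(t), γ''(t)` linearly independent and `γ'''(t) ∈ span{γ'(t), γ''(t)}` for all `t`
(torsionless for the flat connection), then for every `t₀ ∈ I` the tangent surface
`f(t,s) = γ(t) + s γ'(t)` is, as a germ at `(t₀, 0)`, diffeomorphic to the fold
`(u,w) ↦ (u, w², 0, …, 0)`. -/
theorem torsionless_flat_tangent_surface_is_fold (m : ℕ) (hm : 3 ≤ m)
    (I : Set ℝ) (hI : IsOpen I) (hI' : I.OrdConnected)
    (γ : ℝ → Fin m → ℝ) (hγ : ContDiffOn ℝ (⊤ : ℕ∞) γ I)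
    (hind : ∀ t ∈ I, LinearIndependent ℝ ![deriv γ t, deriv (deriv γ) t])
    (hdep : ∀ t ∈ I, deriv (deriv (deriv γ)) t ∈
      Submodule.span ℝ {deriv γ t, deriv (deriv γ) t}) :
    ∀ t₀ ∈ I,
      GermDiffeomorphic
        (fun p : ℝ × ℝ => γ p.1 + p.2 • deriv γ p.1) (t₀, (0 : ℝ))
        (fun p : ℝ × ℝ => fun j : Fin m =>
          if j.val = 0 then p.1 else if j.val = 1 then p.2 ^ 2 else 0)
        ((0 : ℝ), (0 : ℝ)) := by
  intro t₀ ht₀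
  have hI₀ : ∀ᶠ t in 𝓝 t₀, t ∈ I := hI.mem_nhds ht₀
  let i : Fin m := ⟨0, by lia⟩
  let j : Fin m := ⟨1, by lia⟩
  have hij : i ≠ j := by simp [i, j]
  have hframe : LinearIndependent ℝ ![(Pi.single i 1 : Fin m → ℝ), Pi.single j 1] :=
    (LinearIndependent.pair_iff' (by simp)).2 fun a h ↦ by simpa [hij] using congrFun h j
  have hfold : fold (Pi.single i 1) (Pi.single j 1) =
      fun p (k : Fin m) ↦ if k.val = 0 then p.1 else if k.val = 1 then p.2 ^ 2 else 0 := by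
    simpa only [Fin.ext_iff] using fold_single hij
  rw [← hfold]
  exact torsionless_flat_tangent_surface_is_fold_general
    (hI₀.mono fun t ht ↦ hγ.contDiffAt (hI.mem_nhds ht)) (hind t₀ ht₀) (hI₀.mono hdep) hframe
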